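/- Let the cluster sizes satisfy s₁ ≥ s₂ ≥ … ≥ s_k ≥ 1 with s₁ + … + s_k = n, and define δ_i := λ_i(G) − (p−q)·s_i for i ∈ [k]. Then: (1) δ_i ≥ 0 for every i ∈ [k] and Σ_{i=1}^{k} δ_i = n·q; (2) λ₁(G) ≥ n·q + (p−q)·n/k, and hence Σ_{i=2}^{k} δ_i ≤ (p−q)·(s₁ − n/k). -/

import Mathlib

open MeasureTheory ProbabilityTheory Matrix Finset

namespace SBM

/-- Euclidean norm of a vector. -/
noncomputable def enorm {m : Type*} [Fintype m] (x : m → ℝ) : ℝ :=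
  Real.sqrt (∑ i, x i ^ 2)

/-- Spectral (ℓ²-operator) norm of a matrix. -/
noncomputable def specNorm {n : ℕ} (A : Matrix (Fin n) (Fin n) ℝ) : ℝ :=
  ‖Matrix.toEuclideanCLM (𝕜 := ℝ) A‖

/-- The `2 → ∞` norm: maximal Euclidean norm of a row. -/
noncomputable def n2i {n : ℕ} (A : Matrix (Fin n) (Fin n) ℝ) : ℝ :=
  ⨆ i : Fin n, enorm (A i)

/-- The mean matrix `G` of the SSBM with cluster assignment `cl`. -/
def meanMatrix (n k : ℕ) (p q : ℝ) (cl : Fin n → Fin k) : Matrix (Fin n) (Fin n) ℝ :=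
  Matrix.of fun u v => if cl u = cl v then p else q

/-- The size of cluster `i`. -/
def clusterSize {n k : ℕ} (cl : Fin n → Fin k) (i : Fin k) : ℕ :=
  (Finset.univ.filter fun v => cl v = i).card

/-- The partition is balanced: every cluster size is within a `1 ± 1/(16 log n)` factor
of `n / k`. -/
noncomputable def Balanced (n k : ℕ) (cl : Fin n → Fin k) : Prop :=
  ∀ i : Fin k,
    (1 - 1 / (16 * Real.log n)) * ((n : ℝ) / k) ≤ (clusterSize cl i : ℝ) ∧
    (clusterSize cl i : ℝ) ≤ (1 + 1 / (16 * Real.log n)) * ((n : ℝ) / k)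

/-- `lam, v` is a spectral decomposition of `A`: eigenvalues in non-increasing order with
an orthonormal eigenbasis. -/
def IsSpectralDecomp {n : ℕ} (A : Matrix (Fin n) (Fin n) ℝ)
    (lam : Fin n → ℝ) (v : Fin n → Fin n → ℝ) : Prop :=
  Antitone lam ∧
  (∀ i j, dotProduct (v i) (v j) = if i = j then (1 : ℝ) else 0) ∧
  A = ∑ i, lam i • Matrix.vecMulVec (v i) (v i)

/-- Orthogonal projection onto the span of the top `k` eigenvectors `v 0, …, v (k-1)`. -/
noncomputable def projTop {n : ℕ} (k : ℕ) (v : Fin n → Fin n → ℝ) :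
    Matrix (Fin n) (Fin n) ℝ :=
  ∑ i ∈ Finset.univ.filter (fun i : Fin n => (i : ℕ) < k), Matrix.vecMulVec (v i) (v i)

/-- The column of `A` indexed by `u`. -/
def column {n : ℕ} (A : Matrix (Fin n) (Fin n) ℝ) (u : Fin n) : Fin n → ℝ :=
  fun i => A i u

/-- `ψ(M) = A·M² + B·M` where `A = -1/(λ₁μ)`, `B = 1/λ₁ + 1/μ`. -/
noncomputable def psiM {n : ℕ} (lam1 mu : ℝ) (M : Matrix (Fin n) (Fin n) ℝ) :
    Matrix (Fin n) (Fin n) ℝ :=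
  (-(1 / (lam1 * mu))) • (M * M) + (1 / lam1 + 1 / mu) • M

/-- `φ(M) = ψ(M)^r`. -/
noncomputable def phiM {n : ℕ} (lam1 mu : ℝ) (r : ℕ) (M : Matrix (Fin n) (Fin n) ℝ) :
    Matrix (Fin n) (Fin n) ℝ :=
  psiM lam1 mu M ^ r

/-- `ψ(t) = A·t² + B·t` where `A = -1/(λ₁μ)`, `B = 1/λ₁ + 1/μ`. -/
noncomputable def psiR (lam1 mu t : ℝ) : ℝ :=
  (-(1 / (lam1 * mu))) * t ^ 2 + (1 / lam1 + 1 / mu) * t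

/-- `φ(t) = ψ(t)^r`. -/
noncomputable def phiR (lam1 mu : ℝ) (r : ℕ) (t : ℝ) : ℝ := psiR lam1 mu t ^ r

end SBM

namespace SBM

/-- The quadratic form of a matrix. -/
noncomputable def quad {n : ℕ} (A : Matrix (Fin n) (Fin n) ℝ) (x : Fin n → ℝ) : ℝ :=
  ∑ u, ∑ w, x u * A u w * x w

/-- Sum of the entries of `x` over a cluster. -/
noncomputable def csum {n k : ℕ} (cl : Fin n → Fin k) (x : Fin n → ℝ) (c : Fin k) : ℝ :=
  ∑ u, if cl u = c then x u else 0

lemma csum_const {n k : ℕ} (cl : Fin n → Fin k) (a : Fin k → ℝ) (c : Fin k) :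
    csum cl (fun u => a (cl u)) c = (clusterSize cl c : ℝ) * a c := by
  unfold csum clusterSize
  rw [← Finset.sum_filter, Finset.sum_congr rfl (g := fun _ => a c)]
  · simp
  · intro u hu
    rw [(Finset.mem_filter.mp hu).2]

lemma sum_cl {n k : ℕ} (cl : Fin n → Fin k) (x : Fin n → ℝ) (a : Fin k → ℝ) :
    ∑ u, x u * a (cl u) = ∑ c, csum cl x c * a c := by
  unfold csum
  simp_rw [Finset.sum_mul, ite_mul, zero_mul]
  rw [Finset.sum_comm]
  simp

lemma quad_mean {n k : ℕ} (p q : ℝ) (cl : Fin n → Fin k) (x : Fin n → ℝ) :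
    quad (meanMatrix n k p q cl) x =
      q * (∑ u, x u) ^ 2 + (p - q) * ∑ c, csum cl x c ^ 2 := by
  have h1 : ∑ c, csum cl x c ^ 2 = ∑ u, ∑ w, x u * ((if cl w = cl u then x w else 0)) := by
    simp_rw [← Finset.mul_sum]
    exact ((sum_cl cl x (csum cl x)).trans (by simp_rw [sq])).symm
  rw [h1, sq, Finset.sum_mul_sum, Finset.mul_sum, Finset.mul_sum, ← Finset.sum_add_distrib]
  unfold quad
  refine Finset.sum_congr rfl fun u _ => ?_
  rw [Finset.mul_sum, Finset.mul_sum, ← Finset.sum_add_distrib]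
  refine Finset.sum_congr rfl fun w _ => ?_
  by_cases h : cl u = cl w
  · simp [meanMatrix, h]; ring
  · simp [meanMatrix, h, Ne.symm h]; ring

lemma quad_spec {n : ℕ} {A : Matrix (Fin n) (Fin n) ℝ} {lam : Fin n → ℝ}
    {v : Fin n → Fin n → ℝ} (h : IsSpectralDecomp A lam v) (x : Fin n → ℝ) :
    quad A x = ∑ i, lam i * (v i ⬝ᵥ x) ^ 2 := by
  have : ∀ u w, A u w = ∑ i, lam i * (v i u * v i w) := by
    intro u w
    conv_lhs => rw [h.2.2]
    simp [Matrix.sum_apply, Matrix.vecMulVec_apply]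
  unfold quad
  simp_rw [this, dotProduct, sq, Finset.sum_mul_sum, Finset.mul_sum, Finset.sum_mul]
  conv_rhs => rw [Finset.sum_comm]
  refine Finset.sum_congr rfl fun u _ => ?_
  conv_rhs => rw [Finset.sum_comm]
  refine Finset.sum_congr rfl fun w _ => Finset.sum_congr rfl fun i _ => ?_
  ring

lemma parseval {n : ℕ} {A : Matrix (Fin n) (Fin n) ℝ} {lam : Fin n → ℝ}
    {v : Fin n → Fin n → ℝ} (h : IsSpectralDecomp A lam v) (x : Fin n → ℝ) :
    ∑ i, (v i ⬝ᵥ x) ^ 2 = ∑ u, x u ^ 2 := by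
  have h1 : (Matrix.of v) * (Matrix.of v)ᵀ = 1 := by
    ext i j
    simpa [Matrix.mul_apply, dotProduct, Matrix.one_apply] using h.2.1 i j
  have h2 : (Matrix.of v)ᵀ * (Matrix.of v) = 1 := mul_eq_one_comm.mp h1
  have h3 : (Matrix.of v *ᵥ x) ⬝ᵥ (Matrix.of v *ᵥ x) = x ⬝ᵥ x := by
    rw [Matrix.dotProduct_mulVec, Matrix.vecMul_mulVec, h2, Matrix.vecMul_one]
  simpa [dotProduct, Matrix.mulVec, sq] using h3

lemma trace_spec {n : ℕ} {A : Matrix (Fin n) (Fin n) ℝ} {lam : Fin n → ℝ}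
    {v : Fin n → Fin n → ℝ} (h : IsSpectralDecomp A lam v) :
    ∑ i, lam i = ∑ u, A u u := by
  have : ∀ u, A u u = ∑ i, lam i * (v i u * v i u) := by
    intro u
    conv_lhs => rw [h.2.2]
    simp [Matrix.sum_apply, Matrix.vecMulVec_apply]
  simp_rw [this]
  rw [Finset.sum_comm]
  refine Finset.sum_congr rfl fun i _ => ?_
  have := h.2.1 i i
  simp only [dotProduct, if_true] at this
  rw [← Finset.mul_sum, this, mul_one]

lemma lam_nonneg {n k : ℕ} {p q : ℝ} (hq : 0 ≤ q) (hpq : q < p) {cl : Fin n → Fin k}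
    {lam : Fin n → ℝ} {v : Fin n → Fin n → ℝ}
    (h : IsSpectralDecomp (meanMatrix n k p q cl) lam v) (j : Fin n) : 0 ≤ lam j := by
  have h1 := quad_spec h (v j)
  simp only [h.2.1] at h1
  rw [quad_mean] at h1
  simp at h1
  rw [← h1]
  have : 0 ≤ p - q := by linarith
  positivity

lemma lam_nonpos {n k : ℕ} {p q : ℝ} {cl : Fin n → Fin k}
    {lam : Fin n → ℝ} {v : Fin n → Fin n → ℝ}
    (h : IsSpectralDecomp (meanMatrix n k p q cl) lam v) (j : Fin n) (hj : k ≤ j) :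
    lam j ≤ 0 := by
  let M : Matrix (Fin n) (Fin n) ℝ := Matrix.of fun r d =>
    if hr : (r : ℕ) < k then csum cl (v d) ⟨r, hr⟩ else
      if j < r then (if r = d then 1 else 0) else 0
  have hdet : M.det = 0 := by
    apply Matrix.det_eq_zero_of_row_eq_zero j
    intro d
    simp [M, hj]
  obtain ⟨b, hb0, hb⟩ := Matrix.exists_mulVec_eq_zero_iff.mpr hdet
  set x : Fin n → ℝ := fun u => ∑ d, b d * v d u with hx
  have hdot : ∀ i, v i ⬝ᵥ x = b i := by
    intro i
    have : v i ⬝ᵥ x = ∑ d, b d * (v i ⬝ᵥ v d) := by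
      simp only [hx, dotProduct, Finset.mul_sum]
      rw [Finset.sum_comm]
      refine Finset.sum_congr rfl fun u _ => Finset.sum_congr rfl fun w _ => ?_
      ring
    rw [this]
    simp [h.2.1]
  have hc : ∀ c, csum cl x c = 0 := by
    intro c
    by_cases hcn : (c : ℕ) < n
    · have := congrFun hb ⟨c, hcn⟩
      simp only [Matrix.mulVec, dotProduct, M, Matrix.of_apply, c.2, dif_pos, Fin.eta,
        Pi.zero_apply] at this
      rw [← this]
      simp only [csum, hx, Finset.sum_mul]
      rw [Finset.sum_comm]
      refine Finset.sum_congr rfl fun u _ => ?_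
      split_ifs
      · exact Finset.sum_congr rfl fun w _ => mul_comm _ _
      · simp
    · omega
  have hbz : ∀ i, j < i → b i = 0 := by
    intro i hi
    have := congrFun hb i
    have hik : ¬ (i : ℕ) < k := by
      have : (j : ℕ) < i := hi
      omega
    simpa [Matrix.mulVec, dotProduct, M, hik, hi] using this
  have hsumx : ∑ u, x u = 0 := by
    have := sum_cl cl x (fun _ => 1)
    simpa [hc] using this
  have hQ := quad_spec h x
  rw [quad_mean] at hQ
  simp only [hc, hsumx, hdot] at hQ
  simp at hQ
  have hge : lam j * ∑ i, b i ^ 2 ≤ ∑ i, lam i * b i ^ 2 := by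
    rw [Finset.mul_sum]
    refine Finset.sum_le_sum fun i _ => ?_
    rcases le_or_gt i j with hi | hi
    · exact mul_le_mul_of_nonneg_right (h.1 hi) (sq_nonneg _)
    · simp [hbz i hi]
  have hposb : 0 < ∑ i, b i ^ 2 := by
    obtain ⟨i, hi⟩ := Function.ne_iff.mp hb0
    exact Finset.sum_pos' (fun _ _ => sq_nonneg _) ⟨i, Finset.mem_univ _, by
      have : b i ≠ 0 := hi
      positivity⟩
  by_contra hcon
  push Not at hcon
  have := mul_pos hcon hposb
  linarith

lemma lam_ge {n k : ℕ} (hkn : k ≤ n) {p q : ℝ} (hq : 0 ≤ q) (hpq : q < p)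
    {cl : Fin n → Fin k} (hpos : ∀ i : Fin k, 1 ≤ clusterSize cl i)
    (hsorted : ∀ i j : Fin k, i ≤ j → clusterSize cl j ≤ clusterSize cl i)
    {lam : Fin n → ℝ} {v : Fin n → Fin n → ℝ}
    (h : IsSpectralDecomp (meanMatrix n k p q cl) lam v) (i : Fin k) :
    (p - q) * (clusterSize cl i : ℝ) ≤ lam (Fin.castLE hkn i) := by
  let M : Matrix (Fin k) (Fin k) ℝ := Matrix.of fun r d =>
    if r < i then csum cl (v (Fin.castLE hkn r)) d else
      if i < r then (if r = d then 1 else 0) else 0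
  have hdet : M.det = 0 := by
    apply Matrix.det_eq_zero_of_row_eq_zero i
    intro d
    simp [M]
  obtain ⟨a, ha0, ha⟩ := Matrix.exists_mulVec_eq_zero_iff.mpr hdet
  set x : Fin n → ℝ := fun u => a (cl u) with hx
  have hdot : ∀ r : Fin n, r < Fin.castLE hkn i → v r ⬝ᵥ x = 0 := by
    intro r hr
    have hr' : (r : ℕ) < i := hr
    have := congrFun ha ⟨r, hr'.trans i.2⟩
    have h2 : (⟨r, hr'.trans i.2⟩ : Fin k) < i := hr'
    simp only [Matrix.mulVec, dotProduct, M, Matrix.of_apply, h2, if_true,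
      Pi.zero_apply] at this
    rw [← this]
    exact sum_cl cl (v r) a
  have haz : ∀ c, i < c → a c = 0 := by
    intro c hc
    have := congrFun ha c
    simpa [Matrix.mulVec, dotProduct, M, hc, hc.le.not_gt] using this
  have hnorm : ∑ u, x u ^ 2 = ∑ c, (clusterSize cl c : ℝ) * a c ^ 2 := by
    have := sum_cl cl x a
    rw [hx] at this
    simp only [csum_const] at this
    simp only [hx, sq, this, mul_assoc]
  have hs : ∀ c, (0 : ℝ) < clusterSize cl c := fun c => by exact_mod_cast hpos c
  have hposx : 0 < ∑ u, x u ^ 2 := by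
    rw [hnorm]
    obtain ⟨c, hc⟩ := Function.ne_iff.mp ha0
    refine Finset.sum_pos' (fun c _ => mul_nonneg (hs c).le (sq_nonneg _))
      ⟨c, Finset.mem_univ _, ?_⟩
    have : a c ≠ 0 := hc
    have := hs c
    positivity
  have hup : quad (meanMatrix n k p q cl) x ≤ lam (Fin.castLE hkn i) * ∑ u, x u ^ 2 := by
    rw [quad_spec h, ← parseval h, Finset.mul_sum]
    refine Finset.sum_le_sum fun r _ => ?_
    rcases lt_or_ge r (Fin.castLE hkn i) with hr | hr
    · simp [hdot r hr]
    · exact mul_le_mul_of_nonneg_right (h.1 hr) (sq_nonneg _)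
  have hlow : (p - q) * (clusterSize cl i : ℝ) * ∑ u, x u ^ 2 ≤
      quad (meanMatrix n k p q cl) x := by
    rw [quad_mean, hnorm, mul_assoc]
    have h1 : (clusterSize cl i : ℝ) * ∑ c, (clusterSize cl c : ℝ) * a c ^ 2 ≤
        ∑ c, csum cl x c ^ 2 := by
      rw [Finset.mul_sum]
      refine Finset.sum_le_sum fun c _ => ?_
      rw [hx, csum_const]
      rcases le_or_gt c i with hc | hc
      · have h3 : (clusterSize cl i : ℝ) ≤ clusterSize cl c := by exact_mod_cast hsorted c i hc
        have h4 := mul_le_mul_of_nonneg_right h3 (mul_nonneg (hs c).le (sq_nonneg (a c)))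
        calc _ ≤ _ := h4
          _ = _ := by ring
      · simp [haz c hc]
    have h2 := mul_le_mul_of_nonneg_left h1 (sub_pos.mpr hpq).le
    have h3 : 0 ≤ q * (∑ u, x u) ^ 2 := mul_nonneg hq (sq_nonneg _)
    linarith
  exact le_of_mul_le_mul_right (hlow.trans hup) hposx

end SBM

open SBM in
/-- Sort the cluster sizes `s₁ ≥ … ≥ s_k ≥ 1` and set
`δᵢ = λᵢ(G) − (p−q)·sᵢ`.  Then `δᵢ ≥ 0`, `Σ δᵢ = n·q`, `λ₁(G) ≥ n·q + (p−q)·n/k`, and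
`Σ_{i≥2} δᵢ ≤ (p−q)·(s₁ − n/k)`. -/
theorem eigenvalues_of_mean_matrix (n k : ℕ) (hn : 0 < n) (hk : 0 < k) (hkn : k ≤ n)
    (p q : ℝ) (hq : 0 ≤ q) (hpq : q < p) (hp : p ≤ 1)
    (cl : Fin n → Fin k)
    (hsum : ∑ i : Fin k, clusterSize cl i = n)
    (hpos : ∀ i : Fin k, 1 ≤ clusterSize cl i)
    (hsorted : ∀ i j : Fin k, i ≤ j → clusterSize cl j ≤ clusterSize cl i)
    (lam : Fin n → ℝ) (v : Fin n → Fin n → ℝ)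
    (hdec : IsSpectralDecomp (meanMatrix n k p q cl) lam v) :
    (∀ i : Fin k, 0 ≤ lam (Fin.castLE hkn i) - (p - q) * (clusterSize cl i : ℝ)) ∧
    (∑ i : Fin k, (lam (Fin.castLE hkn i) - (p - q) * (clusterSize cl i : ℝ)) = (n : ℝ) * q) ∧
    ((n : ℝ) * q + (p - q) * ((n : ℝ) / k) ≤ lam ⟨0, hn⟩) ∧
    (∑ i ∈ Finset.univ.filter (fun i : Fin k => i ≠ ⟨0, hk⟩),
        (lam (Fin.castLE hkn i) - (p - q) * (clusterSize cl i : ℝ)) ≤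
      (p - q) * ((clusterSize cl ⟨0, hk⟩ : ℝ) - (n : ℝ) / k)) := by
  have hsumR : ∑ i : Fin k, (clusterSize cl i : ℝ) = n := by exact_mod_cast hsum
  have hA : ∀ i : Fin k, 0 ≤ lam (Fin.castLE hkn i) - (p - q) * (clusterSize cl i : ℝ) :=
    fun i => sub_nonneg.mpr (lam_ge hkn hq hpq hpos hsorted hdec i)
  have hB : ∑ i : Fin k, (lam (Fin.castLE hkn i) - (p - q) * (clusterSize cl i : ℝ)) =
      (n : ℝ) * q := by
    have h1 : ∑ i : Fin k, lam (Fin.castLE hkn i) = ∑ i, lam i := by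
      refine (Finset.sum_map Finset.univ (Fin.castLEEmb hkn) lam).symm.trans ?_
      refine Finset.sum_subset (Finset.subset_univ _) fun j _ hj => ?_
      refine le_antisymm (lam_nonpos hdec j ?_) (lam_nonneg hq hpq hdec j)
      by_contra hlt
      push Not at hlt
      exact hj (Finset.mem_map.mpr ⟨⟨j, hlt⟩, Finset.mem_univ _, rfl⟩)
    rw [Finset.sum_sub_distrib, ← Finset.mul_sum, hsumR, h1, trace_spec hdec]
    simp [meanMatrix]
    ring
  have hnR : (0 : ℝ) < n := by exact_mod_cast hn
  have hkR : (0 : ℝ) < k := by exact_mod_cast hk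
  have hC : (n : ℝ) * q + (p - q) * ((n : ℝ) / k) ≤ lam ⟨0, hn⟩ := by
    have h1 := quad_mean p q cl (fun _ => 1)
    have h2 : quad (meanMatrix n k p q cl) (fun _ => 1) ≤ lam ⟨0, hn⟩ * n := by
      have hp1 := parseval hdec (fun _ => 1)
      simp only [one_pow, Finset.sum_const, Finset.card_univ, Fintype.card_fin, nsmul_eq_mul,
        mul_one] at hp1
      rw [quad_spec hdec, ← hp1, Finset.mul_sum]
      refine Finset.sum_le_sum fun r _ => ?_
      exact mul_le_mul_of_nonneg_right (hdec.1 (Fin.mk_le_of_le_val (Nat.zero_le _)))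
        (sq_nonneg _)
    have hcs : ∀ c, csum cl (fun _ => 1) c = (clusterSize cl c : ℝ) := by
      intro c
      simpa using csum_const cl (fun _ => 1) c
    simp only [hcs, Finset.sum_const, Finset.card_univ, Fintype.card_fin, nsmul_eq_mul,
      mul_one] at h1
    have h3 := sq_sum_le_card_mul_sum_sq (s := (Finset.univ : Finset (Fin k)))
      (f := fun c => (clusterSize cl c : ℝ))
    rw [hsumR] at h3
    simp only [Finset.card_univ, Fintype.card_fin] at h3
    have h4 : (n : ℝ) ^ 2 / k ≤ ∑ c, (clusterSize cl c : ℝ) ^ 2 := by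
      rw [div_le_iff₀ hkR]
      linarith
    have h5 := mul_le_mul_of_nonneg_left h4 (sub_pos.mpr hpq).le
    refine le_of_mul_le_mul_right ?_ hnR
    calc ((n : ℝ) * q + (p - q) * ((n : ℝ) / k)) * n
        = q * (n : ℝ) ^ 2 + (p - q) * ((n : ℝ) ^ 2 / k) := by ring
      _ ≤ _ := by linarith
  refine ⟨hA, hB, hC, ?_⟩
  have hD := Finset.sum_erase_add Finset.univ
    (fun i : Fin k => lam (Fin.castLE hkn i) - (p - q) * (clusterSize cl i : ℝ))
    (Finset.mem_univ (⟨0, hk⟩ : Fin k))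
  rw [hB] at hD
  rw [Finset.filter_ne']
  have h0 : Fin.castLE hkn ⟨0, hk⟩ = ⟨0, hn⟩ := rfl
  simp only [h0] at hD
  linarith
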